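/- Let α, β ≥ -1/2. Then for all t > 0 and θ, φ ∈ [0,π], 𝓗_t^{α,β}(θ,φ) = ∫_{[-1,1]} ∫_{[-1,1]} Ψ^{α,β}(t,θ,φ,u,v) dΠ_α(u) dΠ_β(v). -/

import Mathlib

open MeasureTheory Real Set
open scoped ENNReal Classical

noncomputable def cab (α β : ℝ) : ℝ :=
  Real.Gamma (α + β + 2) / (2 ^ (α + β + 1) * Real.Gamma (α + 1) * Real.Gamma (β + 1))

noncomputable def F4 (a₁ a₂ b₁ b₂ x y : ℝ) : ℝ :=
  ∑' p : ℕ × ℕ,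
    (Polynomial.eval a₁ (ascPochhammer ℝ (p.1 + p.2)) *
      Polynomial.eval a₂ (ascPochhammer ℝ (p.1 + p.2))) /
    (Polynomial.eval b₁ (ascPochhammer ℝ p.1) * Polynomial.eval b₂ (ascPochhammer ℝ p.2) *
      (Nat.factorial p.1) * (Nat.factorial p.2)) * x ^ p.1 * y ^ p.2

noncomputable def Hker (α β t θ φ : ℝ) : ℝ :=
  cab α β * Real.sinh (t / 2) / Real.cosh (t / 2) ^ (α + β + 2) *
    F4 ((α + β + 2) / 2) ((α + β + 3) / 2) (α + 1) (β + 1)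
      ((Real.sin (θ / 2) * Real.sin (φ / 2) / Real.cosh (t / 2)) ^ 2)
      ((Real.cos (θ / 2) * Real.cos (φ / 2) / Real.cosh (t / 2)) ^ 2)

noncomputable def qf (θ φ u v : ℝ) : ℝ :=
  1 - u * Real.sin (θ / 2) * Real.sin (φ / 2) - v * Real.cos (θ / 2) * Real.cos (φ / 2)

noncomputable def Psi (α β t θ φ u v : ℝ) : ℝ :=
  cab α β * Real.sinh (t / 2) / (Real.cosh (t / 2) - 1 + qf θ φ u v) ^ (α + β + 2)

noncomputable def PsiE (α β t θ φ u v : ℝ) : ℝ :=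
  (Psi α β t θ φ u v + Psi α β t θ φ (-u) v + Psi α β t θ φ u (-v) +
    Psi α β t θ φ (-u) (-v)) / 4

noncomputable def PiMeas (ν : ℝ) : Measure ℝ :=
  if ν = -(1/2) then (2⁻¹ : ℝ≥0∞) • (Measure.dirac (-1) + Measure.dirac 1)
  else (volume.restrict (Icc (-1 : ℝ) 1)).withDensity
    (fun u => ENNReal.ofReal
      (Real.Gamma (ν + 1) / (Real.sqrt π * Real.Gamma (ν + 1/2)) * (1 - u ^ 2) ^ (ν - 1/2)))

noncomputable def PiFun (γ u : ℝ) : ℝ :=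
  Real.Gamma (γ + 1) / (Real.sqrt π * Real.Gamma (γ + 1/2)) *
    ∫ w in (0 : ℝ)..u, (1 - w ^ 2) ^ (γ - 1/2)

noncomputable def PiInt (ν : ℝ) (S : Set ℝ) (f : ℝ → ℝ) : ℝ :=
  if ν = -(1/2) then
    ((if (-1 : ℝ) ∈ S then f (-1) else 0) + (if (1 : ℝ) ∈ S then f 1 else 0)) / 2
  else ∫ u in S, f u *
    (Real.Gamma (ν + 1) / (Real.sqrt π * Real.Gamma (ν + 1/2)) * (1 - u ^ 2) ^ (ν - 1/2))

noncomputable def muab (α β : ℝ) : Measure ℝ :=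
  (volume.restrict (Icc (0 : ℝ) π)).withDensity
    (fun θ => ENNReal.ofReal (Real.sin (θ / 2) ^ (2 * α + 1) * Real.cos (θ / 2) ^ (2 * β + 1)))

def ballI (θ r : ℝ) : Set ℝ := Ioo (θ - r) (θ + r) ∩ Icc 0 π

lemma betaIntegral_ofReal (a b : ℝ) :
    Complex.betaIntegral a b = ((∫ x in (0 : ℝ)..1, x ^ (a - 1) * (1 - x) ^ (b - 1) : ℝ) : ℂ) := by
  rw [Complex.betaIntegral, ← intervalIntegral.integral_ofReal]
  refine intervalIntegral.integral_congr fun x hx => ?_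
  rw [uIcc_of_le zero_le_one] at hx
  rw [Complex.ofReal_mul, Complex.ofReal_cpow hx.1, Complex.ofReal_cpow (sub_nonneg.2 hx.2)]
  push_cast
  rfl

lemma integral_rpow_mul_one_sub_rpow {a b : ℝ} (ha : 0 < a) (hb : 0 < b) :
    ∫ x in (0 : ℝ)..1, x ^ (a - 1) * (1 - x) ^ (b - 1) =
      Real.Gamma a * Real.Gamma b / Real.Gamma (a + b) := by
  have h := ProbabilityTheory.beta_eq_betaIntegralReal a b ha hb
  rw [betaIntegral_ofReal, Complex.ofReal_re] at h
  exact h.symm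

lemma integral_one_sub_sq_rpow {s : ℝ} (hs : 0 < s) :
    ∫ u in (-1 : ℝ)..1, (1 - u ^ 2) ^ (s - 1) =
      √π * Real.Gamma s / Real.Gamma (s + 1 / 2) := by
  have h1 : ∫ u in (-1 : ℝ)..1, (1 - u ^ 2) ^ (s - 1) =
      ∫ u in (-1 : ℝ)..1, (fun x : ℝ => (4 : ℝ) ^ (s - 1) *
        (x ^ (s - 1) * (1 - x) ^ (s - 1))) (u / 2 + 1 / 2) := by
    refine intervalIntegral.integral_congr fun u hu => ?_
    rw [uIcc_of_le (by norm_num)] at hu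
    obtain ⟨hl, hr⟩ := hu
    simp only
    rw [← Real.mul_rpow (by linarith) (by linarith),
      ← Real.mul_rpow (by norm_num) (mul_nonneg (by linarith) (by linarith))]
    congr 1
    ring
  have hΓ : Real.Gamma (s + s) ≠ 0 := (Real.Gamma_pos_of_pos (by linarith)).ne'
  have hΓ' : Real.Gamma (s + 1 / 2) ≠ 0 := (Real.Gamma_pos_of_pos (by linarith)).ne'
  have h4 : (4 : ℝ) ^ (s - 1) * 2 * 2 ^ (1 - 2 * s) = 1 := by
    rw [show (4 : ℝ) = 2 ^ (2 : ℝ) by norm_num, ← Real.rpow_mul (by norm_num),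
      ← Real.rpow_add_one (by norm_num), ← Real.rpow_add (by norm_num)]
    ring_nf
    simp
  have hdup := Real.Gamma_mul_Gamma_add_half s
  rw [h1, intervalIntegral.integral_comp_div_add (fun x : ℝ => (4 : ℝ) ^ (s - 1) *
    (x ^ (s - 1) * (1 - x) ^ (s - 1))) two_ne_zero]
  norm_num only
  rw [intervalIntegral.integral_const_mul, integral_rpow_mul_one_sub_rpow hs hs, smul_eq_mul]
  rw [← two_mul s] at hΓ ⊢
  generalize Real.Gamma (s + 1 / 2) = G at *
  generalize Real.Gamma (2 * s) = G₂ at *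
  field_simp
  linear_combination (4 : ℝ) ^ (s - 1) * 2 * hdup + G₂ * √π * h4

lemma intervalIntegrable_one_sub_sq_rpow {s : ℝ} (hs : 0 < s) :
    IntervalIntegrable (fun u : ℝ => (1 - u ^ 2) ^ (s - 1)) volume (-1) 1 := by
  refine intervalIntegral.intervalIntegrable_of_integral_ne_zero ?_
  rw [integral_one_sub_sq_rpow hs]
  have := Real.Gamma_pos_of_pos hs
  have := Real.Gamma_pos_of_pos (show 0 < s + 1 / 2 by linarith)
  positivity

lemma integral_pow_succ_succ_mul_one_sub_sq_rpow {s : ℝ} (hs : 0 < s) (m : ℕ) :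
    (m + 1 + 2 * s) * ∫ u in (-1 : ℝ)..1, u ^ (m + 2) * (1 - u ^ 2) ^ (s - 1) =
      (m + 1) * ∫ u in (-1 : ℝ)..1, u ^ m * (1 - u ^ 2) ^ (s - 1) := by
  have hint (k : ℕ) : IntervalIntegrable
      (fun u : ℝ => u ^ k * (1 - u ^ 2) ^ (s - 1)) volume (-1) 1 :=
    (intervalIntegrable_one_sub_sq_rpow hs).continuousOn_mul (by fun_prop)
  have hder : ∀ u ∈ Ioo (-1 : ℝ) 1, HasDerivAt (fun u : ℝ => u ^ (m + 1) * (1 - u ^ 2) ^ s)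
      ((m + 1) * (u ^ m * (1 - u ^ 2) ^ (s - 1)) -
        (m + 1 + 2 * s) * (u ^ (m + 2) * (1 - u ^ 2) ^ (s - 1))) u := by
    rintro u ⟨hl, hr⟩
    have hpos : 0 < 1 - u ^ 2 := by nlinarith
    have h1 : HasDerivAt (fun u : ℝ => 1 - u ^ 2) (-(2 * u)) u := by
      simpa using (hasDerivAt_pow 2 u).const_sub 1
    have h2 := (hasDerivAt_pow (m + 1) u).mul (h1.rpow_const (p := s) (Or.inl hpos.ne'))
    refine h2.congr_deriv ?_
    have h3 : (1 - u ^ 2) ^ s = (1 - u ^ 2) ^ (s - 1) * (1 - u ^ 2) := by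
      rw [← Real.rpow_add_one hpos.ne', sub_add_cancel]
    rw [h3]
    push_cast
    ring
  have hcont : ContinuousOn (fun u : ℝ => u ^ (m + 1) * (1 - u ^ 2) ^ s) (Icc (-1) 1) :=
    (by fun_prop : Continuous fun u : ℝ => u ^ (m + 1)).continuousOn.mul
      ((Real.continuous_rpow_const hs.le).comp
        (by fun_prop : Continuous fun u : ℝ => 1 - u ^ 2)).continuousOn
  have h := intervalIntegral.integral_eq_sub_of_hasDerivAt_of_le (by norm_num) hcont hder
    (((hint m).const_mul _).sub ((hint (m + 2)).const_mul _))
  rw [intervalIntegral.integral_sub ((hint m).const_mul _) ((hint (m + 2)).const_mul _),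
    intervalIntegral.integral_const_mul, intervalIntegral.integral_const_mul] at h
  norm_num [Real.zero_rpow hs.ne'] at h
  linarith

lemma integral_pow_odd_mul_one_sub_sq_rpow (s : ℝ) (j : ℕ) :
    ∫ u in (-1 : ℝ)..1, u ^ (2 * j + 1) * (1 - u ^ 2) ^ (s - 1) = 0 := by
  have h := intervalIntegral.integral_comp_neg (a := (-1 : ℝ)) (b := 1)
    (fun u : ℝ => u ^ (2 * j + 1) * (1 - u ^ 2) ^ (s - 1))
  have hodd : ∀ u : ℝ, (-u) ^ (2 * j + 1) = -u ^ (2 * j + 1) :=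
    fun u => (odd_two_mul_add_one j).neg_pow u
  simp only [hodd, neg_sq, neg_mul, intervalIntegral.integral_neg, neg_neg] at h
  linarith

lemma integral_pow_even_mul_one_sub_sq_rpow {s : ℝ} (hs : 0 < s) (j : ℕ) :
    ∫ u in (-1 : ℝ)..1, u ^ (2 * j) * (1 - u ^ 2) ^ (s - 1) =
      √π * Real.Gamma s / Real.Gamma (s + 1 / 2) *
        ((ascPochhammer ℝ j).eval (1 / 2) / (ascPochhammer ℝ j).eval (s + 1 / 2)) := by
  induction j with
  | zero => simpa using integral_one_sub_sq_rpow hs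
  | succ j ih =>
    have h := integral_pow_succ_succ_mul_one_sub_sq_rpow hs (2 * j)
    rw [ih] at h
    have hp := ascPochhammer_pos j (s + 1 / 2) (by linarith)
    have hq : (0 : ℝ) < s + 1 / 2 + j := by positivity
    have hr : (0 : ℝ) < (2 * j : ℕ) + 1 + 2 * s := by positivity
    rw [mul_add, mul_one, ← mul_right_inj' hr.ne', h, ascPochhammer_succ_eval,
      ascPochhammer_succ_eval]
    have := Real.Gamma_pos_of_pos (show 0 < s + 1 / 2 by linarith)
    push_cast
    generalize Polynomial.eval (s + 1 / 2) (ascPochhammer ℝ j) = P at *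
    generalize Real.Gamma (s + 1 / 2) = G at *
    field_simp
    ring

lemma integral_PiMeas_of_lt {ν : ℝ} (hν : -(1 / 2) < ν) (f : ℝ → ℝ) :
    ∫ u, f u ∂(PiMeas ν) = Real.Gamma (ν + 1) / (√π * Real.Gamma (ν + 1 / 2)) *
      ∫ u in (-1 : ℝ)..1, f u * (1 - u ^ 2) ^ (ν - 1 / 2) := by
  have hc : 0 ≤ Real.Gamma (ν + 1) / (√π * Real.Gamma (ν + 1 / 2)) := by
    have := Real.Gamma_pos_of_pos (show 0 < ν + 1 by linarith)
    have := Real.Gamma_pos_of_pos (show 0 < ν + 1 / 2 by linarith)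
    positivity
  rw [PiMeas, if_neg hν.ne', integral_withDensity_eq_integral_toReal_smul (by fun_prop)
    (by simp), intervalIntegral.integral_of_le (by norm_num), ← integral_Icc_eq_integral_Ioc,
    ← integral_const_mul]
  refine setIntegral_congr_fun measurableSet_Icc fun u hu => ?_
  have hu' : 0 ≤ 1 - u ^ 2 := by nlinarith [hu.1, hu.2]
  simp only [smul_eq_mul]
  rw [ENNReal.toReal_ofReal (mul_nonneg hc (Real.rpow_nonneg hu' _))]
  ring

lemma integral_PiMeas_neg_half (f : ℝ → ℝ) :
    ∫ u, f u ∂(PiMeas (-(1 / 2))) = (f (-1) + f 1) / 2 := by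
  rw [PiMeas, if_pos rfl, integral_smul_measure,
    integral_add_measure (integrable_dirac (by simp)) (integrable_dirac (by simp)), integral_dirac,
    integral_dirac]
  simp
  ring

lemma integral_pow_odd_PiMeas {ν : ℝ} (hν : -(1 / 2) ≤ ν) (j : ℕ) :
    ∫ u, u ^ (2 * j + 1) ∂(PiMeas ν) = 0 := by
  rcases hν.eq_or_lt with rfl | hν
  · rw [integral_PiMeas_neg_half, (odd_two_mul_add_one j).neg_pow]
    simp
  · have h := integral_pow_odd_mul_one_sub_sq_rpow (ν + 1 / 2) j
    rw [show ν + 1 / 2 - 1 = ν - 1 / 2 by ring] at h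
    rw [integral_PiMeas_of_lt hν, h, mul_zero]

lemma integral_pow_even_PiMeas {ν : ℝ} (hν : -(1 / 2) ≤ ν) (j : ℕ) :
    ∫ u, u ^ (2 * j) ∂(PiMeas ν) =
      (ascPochhammer ℝ j).eval (1 / 2) / (ascPochhammer ℝ j).eval (ν + 1) := by
  rcases hν.eq_or_lt with rfl | hν
  · rw [integral_PiMeas_neg_half, (even_two_mul j).neg_pow,
      show (-(1 / 2) + 1 : ℝ) = 1 / 2 by norm_num,
      div_self (ascPochhammer_pos j (1 / 2) (by norm_num)).ne']
    simp
  · have h := integral_pow_even_mul_one_sub_sq_rpow (show 0 < ν + 1 / 2 by linarith) j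
    rw [show ν + 1 / 2 - 1 = ν - 1 / 2 by ring, show ν + 1 / 2 + 1 / 2 = ν + 1 by ring] at h
    have := Real.Gamma_pos_of_pos (show 0 < ν + 1 by linarith)
    have := Real.Gamma_pos_of_pos (show 0 < ν + 1 / 2 by linarith)
    rw [integral_PiMeas_of_lt hν, h, ← mul_assoc]
    generalize Real.Gamma (ν + 1 / 2) = G at *
    field_simp

lemma isProbabilityMeasure_PiMeas {ν : ℝ} (hν : -(1 / 2) ≤ ν) :
    IsProbabilityMeasure (PiMeas ν) := by
  have h := integral_pow_even_PiMeas hν 0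
  simp only [mul_zero, pow_zero, ascPochhammer_zero, Polynomial.eval_one, div_one,
    integral_const, smul_eq_mul, mul_one] at h
  exact ⟨(ENNReal.toReal_eq_one_iff _).1 h⟩

lemma ae_PiMeas_abs_le_one (ν : ℝ) : ∀ᵐ u ∂(PiMeas ν), |u| ≤ 1 := by
  rw [PiMeas]
  split_ifs
  · refine Measure.ae_smul_measure ?_ _
    rw [ae_add_measure_iff]
    simp [ae_dirac_eq]
  · refine (withDensity_absolutelyContinuous _ _).ae_le ?_
    filter_upwards [ae_restrict_mem measurableSet_Icc] with u hu
    exact abs_le.2 hu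

lemma hasSum_one_div_one_sub_rpow (a : ℝ) {x : ℝ} (hx : |x| < 1) :
    HasSum (fun n : ℕ => (ascPochhammer ℝ n).eval a / n.factorial * x ^ n)
      (1 / (1 - x) ^ a) := by
  have h := (Real.one_div_one_sub_rpow_hasFPowerSeriesOnBall_zero a).hasSum
    (y := x) (by simpa [enorm_eq_nnnorm, ← NNReal.coe_lt_one] using hx)
  rw [zero_add] at h
  refine h.congr_fun fun n => ?_
  have h2 := Ring.factorial_nsmul_multichoose_eq_ascPochhammer a n
  rw [Polynomial.ascPochhammer_smeval_eq_eval, nsmul_eq_mul, Ring.multichoose_eq] at h2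
  have h3 : (n.factorial : ℝ) ≠ 0 := by positivity
  rw [← h2, mul_div_cancel_left₀ _ h3]
  simp [FormalMultilinearSeries.ofScalars, mul_comm]

lemma hasSum_one_div_one_sub_add_rpow {a : ℝ} (ha : 0 < a) {x y : ℝ} (hxy : |x| + |y| < 1) :
    HasSum (fun p : ℕ × ℕ => (ascPochhammer ℝ (p.1 + p.2)).eval a /
      (p.1.factorial * p.2.factorial) * (x ^ p.1 * y ^ p.2)) (1 / (1 - (x + y)) ^ a) := by
  have key : ∀ (x y : ℝ) (n : ℕ), HasSum (fun q : Finset.HasAntidiagonal.antidiagonal n =>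
      (ascPochhammer ℝ (q.1.1 + q.1.2)).eval a /
      (q.1.1.factorial * q.1.2.factorial) * (x ^ q.1.1 * y ^ q.1.2))
      ((ascPochhammer ℝ n).eval a / n.factorial * (x + y) ^ n) := by
    intro x y n
    have hs : (ascPochhammer ℝ n).eval a / n.factorial * (x + y) ^ n =
        ∑ q : Finset.HasAntidiagonal.antidiagonal n, (ascPochhammer ℝ (q.1.1 + q.1.2)).eval a /
        (q.1.1.factorial * q.1.2.factorial) * (x ^ q.1.1 * y ^ q.1.2) := by
      rw [Finset.sum_coe_sort (Finset.HasAntidiagonal.antidiagonal n) (fun q : ℕ × ℕ =>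
        (ascPochhammer ℝ (q.1 + q.2)).eval a /
        (q.1.factorial * q.2.factorial) * (x ^ q.1 * y ^ q.2)), add_pow,
        ← Finset.Nat.sum_antidiagonal_eq_sum_range_succ
          (fun i j => x ^ i * y ^ j * (n.choose i : ℝ)) n, Finset.mul_sum]
      refine Finset.sum_congr rfl fun q hq => ?_
      rw [Finset.HasAntidiagonal.mem_antidiagonal] at hq
      subst hq
      rw [Nat.cast_add_choose]
      have := Nat.factorial_ne_zero (q.1 + q.2)
      field_simp
    rw [hs]
    exact hasSum_fintype _
  have hsum : Summable (fun p : ℕ × ℕ => (ascPochhammer ℝ (p.1 + p.2)).eval a /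
      (p.1.factorial * p.2.factorial) * (x ^ p.1 * y ^ p.2)) := by
    refine Summable.of_norm ?_
    rw [← Finset.HasAntidiagonal.sigmaAntidiagonalEquivProd.summable_iff,
      summable_sigma_of_nonneg (by intro _; exact norm_nonneg _)]
    have hn : ∀ p : ℕ × ℕ, ‖(ascPochhammer ℝ (p.1 + p.2)).eval a /
        (p.1.factorial * p.2.factorial) * (x ^ p.1 * y ^ p.2)‖ =
        (ascPochhammer ℝ (p.1 + p.2)).eval a /
        (p.1.factorial * p.2.factorial) * (|x| ^ p.1 * |y| ^ p.2) := by
      intro p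
      have := ascPochhammer_pos (p.1 + p.2) a ha
      simp [abs_of_pos this]
    refine ⟨fun n => ?_, ?_⟩
    · exact Summable.of_finite
    · have h1 := (hasSum_one_div_one_sub_rpow a (x := |x| + |y|)
        (by rwa [abs_of_nonneg (by positivity)])).summable
      refine h1.congr fun n => ?_
      rw [← (key |x| |y| n).tsum_eq]
      exact tsum_congr fun q => (hn q.1).symm
  have hsum' := Finset.HasAntidiagonal.sigmaAntidiagonalEquivProd.summable_iff.2 hsum
  rw [← Finset.HasAntidiagonal.sigmaAntidiagonalEquivProd.hasSum_iff]
  have h2 := hsum'.hasSum.sigma (fun n => key x y n)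
  have h3 := hasSum_one_div_one_sub_rpow a (x := x + y)
    ((abs_add_le x y).trans_lt hxy)
  rw [h3.unique h2]
  exact hsum'.hasSum

lemma hasSum_integral_integral_one_div_one_sub_rpow {a A B : ℝ} (ha : 0 < a) (hA : 0 ≤ A)
    (hB : 0 ≤ B) (hAB : A + B < 1) (μ ν : Measure ℝ) [IsProbabilityMeasure μ]
    [IsProbabilityMeasure ν] (hμ : ∀ᵐ u ∂μ, |u| ≤ 1) (hν : ∀ᵐ v ∂ν, |v| ≤ 1) :
    HasSum (fun p : ℕ × ℕ => (ascPochhammer ℝ (p.1 + p.2)).eval a /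
      (p.1.factorial * p.2.factorial) * (A ^ p.1 * B ^ p.2) *
      ((∫ u, u ^ p.1 ∂μ) * ∫ v, v ^ p.2 ∂ν))
      (∫ v, ∫ u, 1 / (1 - (u * A + v * B)) ^ a ∂μ ∂ν) := by
  set c : ℕ × ℕ → ℝ := fun p => (ascPochhammer ℝ (p.1 + p.2)).eval a /
    (p.1.factorial * p.2.factorial) * (A ^ p.1 * B ^ p.2) with hc
  have hc0 : ∀ p, 0 ≤ c p := fun p => by
    have := ascPochhammer_pos (p.1 + p.2) a ha
    positivity
  have hcs : Summable c := (hasSum_one_div_one_sub_add_rpow ha (x := A) (y := B)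
    (by rwa [abs_of_nonneg hA, abs_of_nonneg hB])).summable
  have hm : ∀ n : ℕ, |∫ u, u ^ n ∂μ| ≤ 1 := fun n => by
    have := norm_integral_le_of_norm_le_const (μ := μ) (f := fun u => u ^ n) (C := 1) (by
      filter_upwards [hμ] with u hu
      rw [norm_pow]
      exact pow_le_one₀ (norm_nonneg _) hu)
    simpa using this
  have hinner : ∀ v : ℝ, |v| ≤ 1 →
      HasSum (fun p : ℕ × ℕ => c p * ((∫ u, u ^ p.1 ∂μ) * v ^ p.2))
        (∫ u, 1 / (1 - (u * A + v * B)) ^ a ∂μ) := by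
    intro v hv
    have h := hasSum_integral_of_dominated_convergence (μ := μ)
      (F := fun (p : ℕ × ℕ) u => c p * (u ^ p.1 * v ^ p.2))
      (f := fun u => 1 / (1 - (u * A + v * B)) ^ a) (fun p _ => c p)
      (fun p => by fun_prop) ?_ (ae_of_all _ fun _ => hcs) (integrable_const _) ?_
    · simpa only [integral_const_mul, integral_mul_const] using h
    · intro p
      filter_upwards [hμ] with u hu
      rw [norm_mul, Real.norm_of_nonneg (hc0 p), norm_mul, norm_pow, norm_pow]
      exact mul_le_of_le_one_right (hc0 p) (mul_le_one₀ (pow_le_one₀ (norm_nonneg _) hu)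
        (by positivity) (pow_le_one₀ (norm_nonneg _) hv))
    · filter_upwards [hμ] with u hu
      have h := hasSum_one_div_one_sub_add_rpow ha (x := u * A) (y := v * B) (by
        rw [abs_mul, abs_mul, abs_of_nonneg hA, abs_of_nonneg hB]
        nlinarith)
      refine h.congr_fun fun p => ?_
      rw [hc]
      ring
  have h := hasSum_integral_of_dominated_convergence (μ := ν)
    (F := fun (p : ℕ × ℕ) v => c p * ((∫ u, u ^ p.1 ∂μ) * v ^ p.2))
    (f := fun v => ∫ u, 1 / (1 - (u * A + v * B)) ^ a ∂μ) (fun p _ => c p)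
    (fun p => by fun_prop) ?_ (ae_of_all _ fun _ => hcs) (integrable_const _)
    (hν.mono hinner)
  · simpa only [integral_const_mul] using h
  · intro p
    filter_upwards [hν] with v hv
    rw [norm_mul, Real.norm_of_nonneg (hc0 p), norm_mul, norm_pow]
    exact mul_le_of_le_one_right (hc0 p) (mul_le_one₀ (hm _)
      (by positivity) (pow_le_one₀ (norm_nonneg _) hv))

lemma ascPochhammer_eval_two_mul (a : ℝ) (n : ℕ) :
    (ascPochhammer ℝ (2 * n)).eval a =
      4 ^ n * (ascPochhammer ℝ n).eval (a / 2) * (ascPochhammer ℝ n).eval ((a + 1) / 2) := by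
  induction n with
  | zero => simp
  | succ n ih =>
    rw [mul_add, mul_one, ascPochhammer_succ_eval (2 * n + 1), ascPochhammer_succ_eval (2 * n), ih,
      ascPochhammer_succ_eval n, ascPochhammer_succ_eval n]
    push_cast
    ring

lemma factorial_two_mul_eq_ascPochhammer (n : ℕ) :
    ((2 * n).factorial : ℝ) = 4 ^ n * n.factorial * (ascPochhammer ℝ n).eval (1 / 2) := by
  induction n with
  | zero => simp
  | succ n ih =>
    rw [mul_add, mul_one, Nat.factorial_succ, Nat.factorial_succ, Nat.factorial_succ n,
      ascPochhammer_succ_eval]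
    push_cast
    rw [ih]
    ring

lemma F4_eq_integral {α β A B : ℝ} (hα : -(1 / 2) ≤ α) (hβ : -(1 / 2) ≤ β) (hA : 0 ≤ A)
    (hB : 0 ≤ B) (hAB : A + B < 1) {a : ℝ} (ha : 0 < a) :
    F4 (a / 2) ((a + 1) / 2) (α + 1) (β + 1) (A ^ 2) (B ^ 2) =
      ∫ v, ∫ u, 1 / (1 - (u * A + v * B)) ^ a ∂(PiMeas α) ∂(PiMeas β) := by
  have := isProbabilityMeasure_PiMeas hα
  have := isProbabilityMeasure_PiMeas hβ
  have h := hasSum_integral_integral_one_div_one_sub_rpow ha hA hB hAB (PiMeas α) (PiMeas β)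
    (ae_PiMeas_abs_le_one α) (ae_PiMeas_abs_le_one β)
  have hinj : Function.Injective (fun p : ℕ × ℕ => (2 * p.1, 2 * p.2)) := by
    rintro ⟨i, j⟩ ⟨k, l⟩ hp
    simp only [Prod.mk.injEq] at hp ⊢
    omega
  rw [← hinj.hasSum_iff] at h
  · rw [← h.tsum_eq, F4]
    refine tsum_congr fun p => ?_
    simp only [Function.comp]
    rw [integral_pow_even_PiMeas hα, integral_pow_even_PiMeas hβ, ← mul_add,
      ascPochhammer_eval_two_mul, factorial_two_mul_eq_ascPochhammer,
      factorial_two_mul_eq_ascPochhammer, pow_add, pow_mul, pow_mul]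
    have h1 := (ascPochhammer_pos p.1 (1 / 2 : ℝ) (by norm_num)).ne'
    have h2 := (ascPochhammer_pos p.2 (1 / 2 : ℝ) (by norm_num)).ne'
    have h3 := (ascPochhammer_pos p.1 (α + 1) (by linarith)).ne'
    have h4 := (ascPochhammer_pos p.2 (β + 1) (by linarith)).ne'
    have h5 : (p.1.factorial : ℝ) ≠ 0 := by positivity
    have h6 : (p.2.factorial : ℝ) ≠ 0 := by positivity
    generalize Polynomial.eval (1 / 2 : ℝ) (ascPochhammer ℝ p.1) = P1 at *
    generalize Polynomial.eval (1 / 2 : ℝ) (ascPochhammer ℝ p.2) = P2 at *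
    generalize Polynomial.eval (α + 1) (ascPochhammer ℝ p.1) = P3 at *
    generalize Polynomial.eval (β + 1) (ascPochhammer ℝ p.2) = P4 at *
    field_simp
  · rintro ⟨m, n⟩ hmn
    rcases Nat.even_or_odd' m with ⟨i, rfl | rfl⟩
    · rcases Nat.even_or_odd' n with ⟨j, rfl | rfl⟩
      · exact absurd ⟨(i, j), rfl⟩ hmn
      · simp [integral_pow_odd_PiMeas hβ]
    · simp [integral_pow_odd_PiMeas hα]

lemma Psi_eq {α β t θ φ u v : ℝ}
    (h : 0 ≤ 1 - (u * (Real.sin (θ / 2) * Real.sin (φ / 2) / Real.cosh (t / 2)) +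
      v * (Real.cos (θ / 2) * Real.cos (φ / 2) / Real.cosh (t / 2)))) :
    Psi α β t θ φ u v = cab α β * Real.sinh (t / 2) / Real.cosh (t / 2) ^ (α + β + 2) *
      (1 / (1 - (u * (Real.sin (θ / 2) * Real.sin (φ / 2) / Real.cosh (t / 2)) +
        v * (Real.cos (θ / 2) * Real.cos (φ / 2) / Real.cosh (t / 2)))) ^ (α + β + 2)) := by
  have hC := Real.cosh_pos (t / 2)
  rw [Psi, div_mul_div_comm, mul_one, ← Real.mul_rpow hC.le h]
  congr 2
  rw [qf]
  field_simp
  ring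

theorem jacobi_poisson_representation_high (α β : ℝ) (hα : -(1/2) ≤ α) (hβ : -(1/2) ≤ β)
    (t : ℝ) (ht : 0 < t) (θ φ : ℝ) (hθ : θ ∈ Icc (0 : ℝ) π) (hφ : φ ∈ Icc (0 : ℝ) π) :
    Hker α β t θ φ =
      ∫ v, (∫ u, Psi α β t θ φ u v ∂(PiMeas α)) ∂(PiMeas β) := by
  have hC : 1 < Real.cosh (t / 2) := Real.one_lt_cosh.2 (by positivity)
  have hC0 : 0 < Real.cosh (t / 2) := by linarith
  have hA : 0 ≤ Real.sin (θ / 2) * Real.sin (φ / 2) / Real.cosh (t / 2) :=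
    div_nonneg (mul_nonneg
      (Real.sin_nonneg_of_nonneg_of_le_pi (by linarith [hθ.1]) (by linarith [hθ.1, hθ.2]))
      (Real.sin_nonneg_of_nonneg_of_le_pi (by linarith [hφ.1]) (by linarith [hφ.1, hφ.2]))) hC0.le
  have hB : 0 ≤ Real.cos (θ / 2) * Real.cos (φ / 2) / Real.cosh (t / 2) :=
    div_nonneg (mul_nonneg
      (Real.cos_nonneg_of_neg_pi_div_two_le_of_le (by linarith [hθ.1, hθ.2]) (by linarith [hθ.2]))
      (Real.cos_nonneg_of_neg_pi_div_two_le_of_le (by linarith [hφ.1, hφ.2])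
        (by linarith [hφ.2]))) hC0.le
  have hAB : Real.sin (θ / 2) * Real.sin (φ / 2) / Real.cosh (t / 2) +
      Real.cos (θ / 2) * Real.cos (φ / 2) / Real.cosh (t / 2) < 1 := by
    rw [← add_div, div_lt_one hC0, add_comm, ← Real.cos_sub]
    exact (Real.cos_le_one _).trans_lt hC
  have hF := F4_eq_integral hα hβ hA hB hAB (show 0 < α + β + 2 by linarith)
  rw [Hker, show α + β + 3 = α + β + 2 + 1 by ring, hF, ← integral_const_mul]
  refine integral_congr_ae ?_
  filter_upwards [ae_PiMeas_abs_le_one β] with v hv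
  rw [← integral_const_mul]
  refine integral_congr_ae ?_
  filter_upwards [ae_PiMeas_abs_le_one α] with u hu
  refine (Psi_eq ?_).symm
  linarith [mul_le_of_le_one_left hA ((le_abs_self u).trans hu),
    mul_le_of_le_one_left hB ((le_abs_self v).trans hv)]
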